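/- Let Ω ⊂ ℍ be a bounded domain, θ ∈ [0,2π), u ∈ ℍ. The (θ,u)-hyperholomorphic Bergman space ${}^θ_u𝒜(Ω)$ is complete in the L² norm: if (fₙ) is a sequence in ${}^θ_u𝒜(Ω)$ which is Cauchy with respect to the norm $‖f‖ = (∫_Ω |f|²dμ)^{1/2}$, then there exists f ∈ ${}^θ_u𝒜(Ω)$ with ∫_Ω |fₙ − f|² dμ → 0. Equivalently, ${}^θ_u𝒜(Ω)$ is a closed subspace of L²(Ω,ℍ). -/

import Mathlib

open MeasureTheory

noncomputable section

/-- The real quaternions `ℍ`. -/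
abbrev H4 : Type := Quaternion ℝ

instance : MeasurableSpace H4 := borel _
instance : BorelSpace H4 := ⟨rfl⟩

/-- The quaternion unit `i`. -/
def qI : H4 := ⟨0, 1, 0, 0⟩
/-- The quaternion unit `j`. -/
def qJ : H4 := ⟨0, 0, 1, 0⟩
/-- `e^{iθ} = cos θ + (sin θ) i` as a quaternion. -/
def eIθ (θ : ℝ) : H4 := ⟨Real.cos θ, Real.sin θ, 0, 0⟩
/-- The basis direction `i e^{iθ} j`. -/
def e2 (θ : ℝ) : H4 := qI * eIθ θ * qJ
/-- The basis direction `e^{iθ} j`. -/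
def e3 (θ : ℝ) : H4 := eIθ θ * qJ

/-- Third θ-coordinate of a quaternion `z = x₀ + x₁ i + x₂ (i e^{iθ} j) + x₃ (e^{iθ} j)`. -/
def x2θ (θ : ℝ) (z : H4) : ℝ := -z.imJ * Real.sin θ + z.imK * Real.cos θ
/-- Fourth θ-coordinate of a quaternion. -/
def x3θ (θ : ℝ) (z : H4) : ℝ := z.imJ * Real.cos θ + z.imK * Real.sin θ

/-- The θ-inner product `⟨u,z⟩_θ`: the dot product of θ-coordinates. -/
def innerθ (θ : ℝ) (u z : H4) : ℝ :=
  u.re * z.re + u.imI * z.imI + x2θ θ u * x2θ θ z + x3θ θ u * x3θ θ z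

/-- Left θ-Cauchy–Riemann operator
`{}^θ𝒟 f = ∂f/∂x₀ + i ∂f/∂x₁ + (i e^{iθ} j) ∂f/∂x₂ + (e^{iθ} j) ∂f/∂x₃`. -/
def Dl (θ : ℝ) (f : H4 → H4) (z : H4) : H4 :=
  fderiv ℝ f z 1 + qI * fderiv ℝ f z qI + e2 θ * fderiv ℝ f z (e2 θ) +
    e3 θ * fderiv ℝ f z (e3 θ)

/-- Left (θ,u)-Cauchy–Riemann operator `{}^θ_u𝒟 f = {}^θ𝒟 f + u f`. -/
def Dlu (θ : ℝ) (u : H4) (f : H4 → H4) (z : H4) : H4 := Dl θ f z + u * f z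

/-- Right θ-Cauchy–Riemann operator. -/
def Dr (θ : ℝ) (f : H4 → H4) (z : H4) : H4 :=
  fderiv ℝ f z 1 + fderiv ℝ f z qI * qI + fderiv ℝ f z (e2 θ) * e2 θ +
    fderiv ℝ f z (e3 θ) * e3 θ

/-- Right (θ,u)-Cauchy–Riemann operator `{}^θ𝒟_{r,u} f = {}^θ𝒟_r f + f u`. -/
def Dru (θ : ℝ) (u : H4) (f : H4 → H4) (z : H4) : H4 := Dr θ f z + f z * u

/-- Embedding of ℂ into the quaternions, `ℂ ≅ ℝ + ℝi ⊂ ℍ`. -/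
def toH (a : ℂ) : H4 := ⟨a.re, a.im, 0, 0⟩

/-- First complex θ-component of a quaternion: `z₁ = x₀ + x₁ i`. -/
def c1 (z : H4) : ℂ := ⟨z.re, z.imI⟩
/-- Second complex θ-component of a quaternion: `z₂ = x₂ + x₃ i`. -/
def c2 (θ : ℝ) (z : H4) : ℂ := ⟨x2θ θ z, x3θ θ z⟩

/-- Wirtinger operator `∂/∂z̄₁ = ∂/∂x₀ + i ∂/∂x₁` on ℂ-valued functions. -/
def db1 (f : H4 → ℂ) (z : H4) : ℂ := fderiv ℝ f z 1 + Complex.I * fderiv ℝ f z qI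
/-- Wirtinger operator `∂/∂z̄₂ = ∂/∂x₂ + i ∂/∂x₃` on ℂ-valued functions. -/
def db2 (θ : ℝ) (f : H4 → ℂ) (z : H4) : ℂ :=
  fderiv ℝ f z (e2 θ) + Complex.I * fderiv ℝ f z (e3 θ)
/-- Wirtinger operator `∂/∂z₂ = ∂/∂x₂ − i ∂/∂x₃` on ℂ-valued functions. -/
def dz2 (θ : ℝ) (f : H4 → ℂ) (z : H4) : ℂ :=
  fderiv ℝ f z (e2 θ) - Complex.I * fderiv ℝ f z (e3 θ)

/-- `e^{iθ}` as a complex number. -/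
def cexpI (θ : ℝ) : ℂ := ⟨Real.cos θ, Real.sin θ⟩

/-- The (θ,u)-hyperholomorphic Bergman space `{}^θ_u𝒜(Ω)`: C¹ null solutions of `{}^θ_u𝒟`
with `∫_Ω |f|² dμ < ∞`. -/
def memA (θ : ℝ) (u : H4) (Ω : Set H4) (f : H4 → H4) : Prop :=
  ContDiffOn ℝ 1 f Ω ∧ (∀ z ∈ Ω, Dlu θ u f z = 0) ∧
    IntegrableOn (fun z => ‖f z‖ ^ 2) Ω volume

open Filter Topology Set

/-- The quaternion unit `k`. -/
def qK : H4 := ⟨0, 0, 0, 1⟩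

lemma qI_re : qI.re = 0 := rfl
lemma qI_imI : qI.imI = 1 := rfl
lemma qI_imJ : qI.imJ = 0 := rfl
lemma qI_imK : qI.imK = 0 := rfl
lemma qJ_re : qJ.re = 0 := rfl
lemma qJ_imI : qJ.imI = 0 := rfl
lemma qJ_imJ : qJ.imJ = 1 := rfl
lemma qJ_imK : qJ.imK = 0 := rfl
lemma qK_re : qK.re = 0 := rfl
lemma qK_imI : qK.imI = 0 := rfl
lemma qK_imJ : qK.imJ = 0 := rfl
lemma qK_imK : qK.imK = 1 := rfl
lemma eIθ_re (θ : ℝ) : (eIθ θ).re = Real.cos θ := rfl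
lemma eIθ_imI (θ : ℝ) : (eIθ θ).imI = Real.sin θ := rfl
lemma eIθ_imJ (θ : ℝ) : (eIθ θ).imJ = 0 := rfl
lemma eIθ_imK (θ : ℝ) : (eIθ θ).imK = 0 := rfl
lemma h_one_re : (1 : H4).re = 1 := rfl
lemma h_one_imI : (1 : H4).imI = 0 := rfl
lemma h_one_imJ : (1 : H4).imJ = 0 := rfl
lemma h_one_imK : (1 : H4).imK = 0 := rfl
lemma h_zero_re : (0 : H4).re = 0 := rfl
lemma h_zero_imI : (0 : H4).imI = 0 := rfl
lemma h_zero_imJ : (0 : H4).imJ = 0 := rfl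
lemma h_zero_imK : (0 : H4).imK = 0 := rfl
attribute [simp] h_one_re h_one_imI h_one_imJ h_one_imK h_zero_re h_zero_imI h_zero_imJ h_zero_imK
attribute [simp] qI_re qI_imI qI_imJ qI_imK qJ_re qJ_imI qJ_imJ qJ_imK qK_re qK_imI qK_imJ qK_imK
attribute [simp] eIθ_re eIθ_imI eIθ_imJ eIθ_imK

lemma e2_eq (θ : ℝ) : e2 θ = (-Real.sin θ) • qJ + (Real.cos θ) • qK := by
  apply Quaternion.ext <;> simp [e2]

lemma e3_eq (θ : ℝ) : e3 θ = (Real.cos θ) • qJ + (Real.sin θ) • qK := by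
  apply Quaternion.ext <;> simp [e3]

/-- The symbol of the Fueter operator, on linear maps. -/
def Sy (L : H4 →L[ℝ] H4) : H4 := L 1 + qI * L qI + qJ * L qJ + qK * L qK

lemma Dl_eq (θ : ℝ) (f : H4 → H4) (z : H4) : Dl θ f z = Sy (fderiv ℝ f z) := by
  unfold Dl Sy
  rw [e2_eq, e3_eq]
  generalize fderiv ℝ f z = L
  have h : Real.cos θ ^ 2 = 1 - Real.sin θ ^ 2 := by
    rw [Real.cos_sq']
  simp only [map_add, map_smul, add_mul, mul_add, smul_mul_assoc, mul_smul_comm, smul_add, smul_smul]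
  generalize qJ * L qJ = a
  generalize qK * L qK = b
  generalize qJ * L qK = c
  generalize qK * L qJ = d
  match_scalars <;> first | (linear_combination h) | (linear_combination -h) | (linear_combination 0 * h)

lemma quat_decomp (y : H4) : y = y.re • (1 : H4) + y.imI • qI + y.imJ • qJ + y.imK • qK := by
  apply Quaternion.ext <;> simp

lemma clm_decomp (L : H4 →L[ℝ] H4) (y : H4) :
    L y = y.re • L 1 + y.imI • L qI + y.imJ • L qJ + y.imK • L qK := by
  conv_lhs => rw [quat_decomp y]
  simp only [map_add, map_smul]

/-- `A e y = ⟨y,e⟩ - conj(y) e`. -/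
def Ak (e : H4) : H4 →L[ℝ] H4 :=
  LinearMap.toContinuousLinearMap
    { toFun := fun y => (inner ℝ y e) • (1 : H4) - star y * e
      map_add' := by
        intro a b
        simp only [inner_add_left, add_smul, star_add, add_mul]
        abel
      map_smul' := by
        intro c a
        simp only [real_inner_smul_left, mul_smul, Quaternion.star_smul, smul_mul_assoc,
          smul_sub, RingHom.id_apply] }

lemma Ak_apply (e y : H4) : Ak e y = (inner ℝ y e) • (1 : H4) - star y * e := rfl

lemma Ak_self (e : H4) : Ak e e = 0 := by
  rw [Ak_apply, Quaternion.inner_self]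
  rw [Quaternion.star_mul_self]
  apply Quaternion.ext <;> simp

lemma inner_one' (y : H4) : inner ℝ y (1 : H4) = y.re := by
  simp [Quaternion.inner_def]
lemma inner_qI (y : H4) : inner ℝ y qI = y.imI := by
  simp [Quaternion.inner_def]
lemma inner_qJ (y : H4) : inner ℝ y qJ = y.imJ := by
  simp [Quaternion.inner_def]
lemma inner_qK (y : H4) : inner ℝ y qK = y.imK := by
  simp [Quaternion.inner_def]

lemma Ak_sum_self (y : H4) :
    y.re • Ak 1 y + y.imI • Ak qI y + y.imJ • Ak qJ y + y.imK • Ak qK y = 0 := by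
  simp only [Ak_apply, inner_one', inner_qI, inner_qJ, inner_qK]
  apply Quaternion.ext <;> simp <;> ring

lemma Ak_sum_clm (y : H4) (L : H4 →L[ℝ] H4) :
    Ak 1 y * L 1 + Ak qI y * L qI + Ak qJ y * L qJ + Ak qK y * L qK = L y - star y * Sy L := by
  rw [clm_decomp L y]
  simp only [Ak_apply, inner_one', inner_qI, inner_qJ, inner_qK, Sy, sub_mul, smul_mul_assoc,
    one_mul, mul_one, mul_add, mul_assoc]
  abel

lemma Sy_smul (c : ℝ) (L : H4 →L[ℝ] H4) : Sy (c • L) = c • Sy L := by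
  simp [Sy, smul_add]

lemma integral_fderiv_zero (T : H4 → H4) (hT : ContDiff ℝ 1 T) (hc : HasCompactSupport T) (v : H4) :
    ∫ y, fderiv ℝ T y v = 0 := by
  have hi : Integrable (fun y => fderiv ℝ T y v) := by
    apply Continuous.integrable_of_hasCompactSupport
    · exact (hT.continuous_fderiv one_ne_zero).clm_apply continuous_const
    · exact hc.fderiv_apply (𝕜 := ℝ) v
  have := integral_smul_fderiv_eq_neg_fderiv_smul_of_integrable (𝕜 := ℝ) (μ := (volume : Measure H4))
    (f := fun _ => (1:ℝ)) (g := T) (v := v) (by simp) (by simpa using hi)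
    (by simpa using hT.continuous.integrable_of_hasCompactSupport hc)
    (by simp) (fun x _ => hT.differentiable one_ne_zero x)
  simpa using this

/-- radial bump function -/
def bmp (r : ℝ) (y : H4) : ℝ := Real.smoothTransition (1 - ‖y‖ ^ 2 / r ^ 2)

lemma bmp_contDiff (r : ℝ) {n : ℕ∞} : ContDiff ℝ n (bmp r) := by
  unfold bmp
  apply Real.smoothTransition.contDiff.comp
  exact contDiff_const.sub ((contDiff_norm_sq ℝ).div_const _)

lemma bmp_zero_of (r : ℝ) (hr : 0 < r) (y : H4) (hy : r ≤ ‖y‖) : bmp r y = 0 := by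
  apply Real.smoothTransition.zero_of_nonpos
  have : 1 ≤ ‖y‖ ^ 2 / r ^ 2 := by
    rw [le_div_iff₀ (by positivity)]
    nlinarith
  linarith

lemma bmp_neg (r : ℝ) (y : H4) : bmp r (-y) = bmp r y := by simp [bmp]

lemma bmp_cs (r : ℝ) (hr : 0 < r) : HasCompactSupport (bmp r) := by
  apply HasCompactSupport.intro (isCompact_closedBall (0:H4) r)
  intro x hx
  apply bmp_zero_of r hr
  simp at hx
  exact hx.le

lemma bmp_int_pos (r : ℝ) (hr : 0 < r) : 0 < ∫ y, bmp r y := by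
  have hc : Continuous (bmp r) := (bmp_contDiff r (n := 0)).continuous
  refine hc.integral_pos_of_hasCompactSupport_nonneg_nonzero (bmp_cs r hr) (x := 0) ?_ ?_
  · intro y; exact Real.smoothTransition.nonneg _
  · simp [bmp]

lemma bmp_fderiv (r : ℝ) (y : H4) : ∃ c : ℝ, ∀ v, fderiv ℝ (bmp r) y v = c * inner ℝ y v := by
  have h1 : HasFDerivAt (fun y : H4 => 1 - ‖y‖ ^ 2 / r ^ 2)
     (-((r^2)⁻¹ • (2 • innerSL ℝ y))) y := by
    have := ((hasStrictFDerivAt_norm_sq y).hasFDerivAt (𝕜 := ℝ)).const_mul ((r^2)⁻¹)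
    have := this.const_sub 1
    have e : (fun y : H4 => 1 - ‖y‖ ^ 2 / r ^ 2) = fun x => 1 - (r ^ 2)⁻¹ * ‖x‖ ^ 2 := by
      funext y
      ring
    rw [e]
    exact this
  have h2 := (Real.smoothTransition.contDiff (n := 1)).differentiable one_ne_zero (1 - ‖y‖ ^ 2 / r ^ 2)
  have h3 := h2.hasDerivAt.comp_hasFDerivAt y h1
  refine ⟨deriv Real.smoothTransition (1 - ‖y‖ ^ 2 / r ^ 2) * (-(2 * (r^2)⁻¹)), fun v => ?_⟩
  have : fderiv ℝ (bmp r) y = _ := h3.fderiv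
  rw [this]
  simp
  ring

lemma T_fderiv (r : ℝ) (e : H4) (G : H4 → H4) (hG : ContDiff ℝ 1 G) (y v : H4) :
    fderiv ℝ (fun y => bmp r y • (Ak e y * G y)) y v =
      bmp r y • (Ak e y * fderiv ℝ G y v + Ak e v * G y)
        + (fderiv ℝ (bmp r) y v) • (Ak e y * G y) := by
  have h1 : HasFDerivAt (bmp r) (fderiv ℝ (bmp r) y) y :=
    ((bmp_contDiff r (n := 1)).differentiable one_ne_zero y).hasFDerivAt
  have h2 : HasFDerivAt G (fderiv ℝ G y) y := (hG.differentiable one_ne_zero y).hasFDerivAt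
  have h3 := (Ak e).hasFDerivAt (x := y)
  have h4 := h1.smul (h3.mul' h2)
  have := h4.fderiv
  have e1 : fderiv ℝ (fun y => bmp r y • (Ak e y * G y)) y = _ := this
  rw [e1]
  simp

lemma radial_id (r : ℝ) (hr : 0 < r) (G : H4 → H4) (hG : ContDiff ℝ 1 G)
    (h0 : ∀ y, ‖y‖ < r → Sy (fderiv ℝ G y) = 0) :
    ∫ y, bmp r y • fderiv ℝ G y y = 0 := by
  have hT : ∀ e, ContDiff ℝ 1 (fun y => bmp r y • (Ak e y * G y)) := fun e =>
    (bmp_contDiff r (n := 1)).smul ((Ak e).contDiff.mul hG)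
  have hTc : ∀ e, HasCompactSupport (fun y => bmp r y • (Ak e y * G y)) := fun e =>
    (bmp_cs r hr).smul_right
  have hi : ∀ e v, Integrable (fun y => fderiv ℝ (fun y => bmp r y • (Ak e y * G y)) y v) := by
    intro e v
    apply Continuous.integrable_of_hasCompactSupport
    · exact ((hT e).continuous_fderiv one_ne_zero).clm_apply continuous_const
    · exact (hTc e).fderiv_apply (𝕜 := ℝ) v
  have hz := fun e v => integral_fderiv_zero _ (hT e) (hTc e) v
  have key : ∀ y, bmp r y • fderiv ℝ G y y =
      fderiv ℝ (fun y => bmp r y • (Ak 1 y * G y)) y 1 +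
      fderiv ℝ (fun y => bmp r y • (Ak qI y * G y)) y qI +
      fderiv ℝ (fun y => bmp r y • (Ak qJ y * G y)) y qJ +
      fderiv ℝ (fun y => bmp r y • (Ak qK y * G y)) y qK := by
    intro y
    simp only [T_fderiv r _ G hG, Ak_self, zero_mul, add_zero]
    obtain ⟨c, hc⟩ := bmp_fderiv r y
    simp only [hc, inner_one', inner_qI, inner_qJ, inner_qK]
    have h1 := Ak_sum_clm y (fderiv ℝ G y)
    have h2 : bmp r y • (star y * Sy (fderiv ℝ G y)) = 0 := by
      by_cases hy : ‖y‖ < r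
      · simp [h0 y hy]
      · simp [bmp_zero_of r hr y (not_lt.1 hy)]
    have h3 : (y.re • Ak 1 y + y.imI • Ak qI y + y.imJ • Ak qJ y + y.imK • Ak qK y) * G y = 0 := by
      rw [Ak_sum_self, zero_mul]
    have h4 : bmp r y • fderiv ℝ G y y = bmp r y • (Ak 1 y * fderiv ℝ G y 1
        + Ak qI y * fderiv ℝ G y qI + Ak qJ y * fderiv ℝ G y qJ + Ak qK y * fderiv ℝ G y qK) := by
      rw [h1, smul_sub, h2, sub_zero]
    rw [h4]
    simp only [add_mul, smul_mul_assoc] at h3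
    have h5 := congrArg (fun x => c • x) h3
    simp only [smul_add, smul_smul, smul_zero] at h5
    rw [← add_zero (bmp r y • _), ← h5]
    simp only [smul_add]
    abel
  simp_rw [key]
  rw [integral_add, integral_add, integral_add]
  · simp [hz]
  · exact hi _ _
  · exact hi _ _
  · exact (hi _ _).add (hi _ _)
  · exact hi _ _
  · exact ((hi _ _).add (hi _ _)).add (hi _ _)
  · exact hi _ _

lemma bdd_fderiv {E F : Type*} [NormedAddCommGroup E] [NormedSpace ℝ E] [NormedAddCommGroup F]
    [NormedSpace ℝ F] (g : E → F) (hg : ContDiff ℝ 1 g) (hgc : HasCompactSupport g) :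
    ∃ C, ∀ x, ‖fderiv ℝ g x‖ ≤ C :=
  (hg.continuous_fderiv one_ne_zero).bounded_above_of_compact_support (hgc.fderiv (𝕜 := ℝ))

lemma mean_value (r : ℝ) (hr : 0 < r) (g : H4 → H4) (hg : ContDiff ℝ 1 g)
    (hgc : HasCompactSupport g) (z : H4)
    (h0 : ∀ x ∈ Metric.ball z r, Sy (fderiv ℝ g x) = 0) :
    ∫ y, bmp r y • g (z + y) = (∫ y, bmp r y) • g z := by
  have hbc : Continuous (bmp r) := (bmp_contDiff r (n := 0)).continuous
  have hdc : Continuous (fderiv ℝ g) := hg.continuous_fderiv one_ne_zero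
  obtain ⟨C, hC⟩ := bdd_fderiv g hg hgc
  let I : ℝ → H4 := fun t => ∫ y, bmp r y • g (z + t • y)
  have hI : ∀ t, HasDerivAt I (∫ y, bmp r y • fderiv ℝ g (z + t • y) y) t := by
    intro t
    refine (hasDerivAt_integral_of_dominated_loc_of_deriv_le (μ := (volume : Measure H4))
      (F := fun t y => bmp r y • g (z + t • y))
      (F' := fun t y => bmp r y • fderiv ℝ g (z + t • y) y)
      (bound := fun y => |bmp r y| * (C * ‖y‖)) (s := univ) univ_mem ?_ ?_ ?_ ?_ ?_ ?_).2
    · refine Eventually.of_forall fun s => Continuous.aestronglyMeasurable ?_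
      exact hbc.smul (hg.continuous.comp (by fun_prop))
    · apply Continuous.integrable_of_hasCompactSupport
      · exact hbc.smul (hg.continuous.comp (by fun_prop))
      · exact (bmp_cs r hr).smul_right
    · refine Continuous.aestronglyMeasurable ?_
      exact hbc.smul ((hdc.comp (by fun_prop : Continuous fun y : H4 => z + t • y)).clm_apply continuous_id)
    · refine Eventually.of_forall fun y s _ => ?_
      rw [norm_smul, Real.norm_eq_abs]
      gcongr
      exact (ContinuousLinearMap.le_opNorm _ _).trans (by gcongr; exact hC _)
    · apply Continuous.integrable_of_hasCompactSupport
      · fun_prop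
      · exact ((bmp_cs r hr).comp_left (g := fun x => |x|) abs_zero).mul_right
    · refine Eventually.of_forall fun y s _ => ?_
      refine HasDerivAt.const_smul (bmp r y) ?_
      have h1 : HasDerivAt (fun s : ℝ => z + s • y) y s := by
        simpa using ((hasDerivAt_id s).smul_const y).const_add z
      exact ((hg.differentiable one_ne_zero (z + s • y)).hasFDerivAt).comp_hasDerivAt s h1
  have hI0 : ∀ t ∈ Icc (0:ℝ) 1, ∫ y, bmp r y • fderiv ℝ g (z + t • y) y = 0 := by
    intro t ht
    rcases eq_or_ne t 0 with rfl | hne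
    · have := radial_id r hr (fun y => fderiv ℝ g z y) (ContinuousLinearMap.contDiff _) (by
        intro y _
        have : fderiv ℝ (fun y => fderiv ℝ g z y) y = fderiv ℝ g z := ContinuousLinearMap.fderiv _
        rw [this]
        exact h0 z (Metric.mem_ball_self hr))
      have e : ∀ y, fderiv ℝ (fun y => fderiv ℝ g z y) y = fderiv ℝ g z :=
        fun y => ContinuousLinearMap.fderiv _
      simpa [e] using this
    · have hd : ∀ y, fderiv ℝ (fun y => g (z + t • y)) y = t • fderiv ℝ g (z + t • y) := by
        intro y
        have h1 : HasFDerivAt (fun y : H4 => z + t • y) (t • ContinuousLinearMap.id ℝ H4) y :=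
          ((hasFDerivAt_id y).const_smul t).const_add z
        have := (((hg.differentiable one_ne_zero (z + t • y)).hasFDerivAt).comp y h1).fderiv
        have e : fderiv ℝ (fun y => g (z + t • y)) y = _ := this
        rw [e]
        ext1 v
        simp
      have := radial_id r hr (fun y => g (z + t • y)) (hg.comp (by fun_prop)) (by
        intro y hy
        rw [hd, Sy_smul, h0, smul_zero]
        rw [Metric.mem_ball, dist_eq_norm, add_sub_cancel_left, norm_smul, Real.norm_eq_abs,
          abs_of_nonneg ht.1]
        nlinarith [norm_nonneg y, ht.2])
      simp only [hd, _root_.smul_apply] at this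
      simp_rw [smul_comm _ t] at this
      rw [integral_smul] at this
      exact (smul_eq_zero.1 this).resolve_left hne
  have := constant_of_has_deriv_right_zero (f := I) (a := 0) (b := 1)
    (fun t _ => (hI t).continuousAt.continuousWithinAt) (fun t ht => by
      have := (hI t).hasDerivWithinAt (s := Ici t)
      rwa [hI0 t ⟨ht.1, ht.2.le⟩] at this) 1 ⟨zero_le_one, le_rfl⟩
  simp only [I, one_smul, zero_smul, add_zero] at this
  rw [this, integral_smul_const]

open scoped Convolution ContDiff

/-- local mean value property, as a convolution identity. -/
lemma local_conv (Ω : Set H4) (hΩo : IsOpen Ω) (g : H4 → H4) (hg : ContDiffOn ℝ 1 g Ω)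
    (hD : ∀ z ∈ Ω, Sy (fderiv ℝ g z) = 0) (z : H4) (r : ℝ) (hr : 0 < r)
    (hz : Metric.closedBall z (2 * r) ⊆ Ω) :
    ((bmp r) ⋆[ContinuousLinearMap.lsmul ℝ ℝ, volume] (Ω.indicator g)) z
      = (∫ y, bmp r y) • g z := by
  let χ : ContDiffBump z := ⟨r, 2 * r, hr, by linarith⟩
  let G : H4 → H4 := fun x => χ x • g x
  have hG : ContDiff ℝ 1 G := by
    rw [contDiff_iff_contDiffAt]
    intro x
    by_cases hx : x ∈ Ω
    · exact χ.contDiff.contDiffAt.smul (hg.contDiffAt (hΩo.mem_nhds hx))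
    · have : G =ᶠ[𝓝 x] fun _ => 0 := by
        have : x ∉ tsupport χ := by
          rw [χ.tsupport_eq]
          exact fun h => hx (hz h)
        filter_upwards [(isClosed_tsupport χ).isOpen_compl.mem_nhds this] with y hy
        have : χ y = 0 := image_eq_zero_of_notMem_tsupport hy
        simp [G, this]
      exact contDiffAt_const.congr_of_eventuallyEq this
  have hGc : HasCompactSupport G := χ.hasCompactSupport.smul_right
  have hGg : ∀ x ∈ Metric.ball z r, G =ᶠ[𝓝 x] g := by
    intro x hx
    filter_upwards [Metric.isOpen_ball.mem_nhds hx] with y hy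
    have : χ y = 1 := χ.one_of_mem_closedBall (Metric.ball_subset_closedBall hy)
    simp [G, this]
  have hsub : Metric.ball z r ⊆ Ω := fun x hx => hz (by
    rw [Metric.mem_closedBall]; rw [Metric.mem_ball] at hx; linarith)
  have := mean_value r hr G hG hGc z (fun x hx => by
    rw [(hGg x hx).fderiv_eq]
    exact hD x (hsub hx))
  rw [(hGg z (Metric.mem_ball_self hr)).eq_of_nhds] at this
  rw [← this, convolution_def]
  rw [← integral_neg_eq_self]
  congr 1
  funext y
  simp only [ContinuousLinearMap.lsmul_apply, sub_neg_eq_add, bmp_neg]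
  by_cases hy : ‖y‖ < r
  · have hm : z + y ∈ Metric.ball z r := by simpa using hy
    rw [indicator_of_mem (hsub hm), (hGg _ hm).eq_of_nhds]
  · simp [bmp_zero_of r hr y (not_lt.1 hy)]
lemma conv_tendsto {V W E₁ F₁ : Type*} [NormedAddCommGroup V] [InnerProductSpace ℝ V]
    [FiniteDimensional ℝ V] [MeasurableSpace V] [BorelSpace V]
    [NormedAddCommGroup W] [NormedSpace ℝ W]
    [NormedAddCommGroup E₁] [NormedSpace ℝ E₁]
    [NormedAddCommGroup F₁] [NormedSpace ℝ F₁]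
    (L : E₁ →L[ℝ] W →L[ℝ] F₁) (k : V → E₁) (hk : Continuous k) (hkc : HasCompactSupport k)
    (h : ℕ → V → W) (hl : V → W) (hi : ∀ n, Integrable (h n)) (hli : Integrable hl)
    (ht : Tendsto (fun n => ∫⁻ x, ‖h n x - hl x‖ₑ) atTop (𝓝 0)) (z : V) :
    Tendsto (fun n => (k ⋆[L, volume] (h n)) z) atTop (𝓝 ((k ⋆[L, volume] hl) z)) := by
  obtain ⟨C, hC⟩ := hk.bounded_above_of_compact_support hkc
  have e1 : ∀ n, Integrable (fun t => L (k t) (h n (z - t))) := fun n =>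
    hkc.convolutionExists_left L hk (hi n).locallyIntegrable z
  have e2 : Integrable (fun t => L (k t) (hl (z - t))) :=
    hkc.convolutionExists_left L hk hli.locallyIntegrable z
  simp only [convolution_def]
  apply tendsto_integral_of_L1 _ e2.aestronglyMeasurable (Eventually.of_forall e1)
  have hb : ∀ n, ∫⁻ t, ‖L (k t) (h n (z - t)) - L (k t) (hl (z - t))‖ₑ
      ≤ ENNReal.ofReal (‖L‖ * C) * ∫⁻ x, ‖h n x - hl x‖ₑ := by
    intro n
    rw [← lintegral_sub_left_eq_self (fun x => ‖h n x - hl x‖ₑ) z, ← lintegral_const_mul' _ _ ENNReal.ofReal_ne_top]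
    apply lintegral_mono
    intro t
    simp only [← map_sub]
    rw [← ofReal_norm, ← ofReal_norm, ← ENNReal.ofReal_mul']
    · apply ENNReal.ofReal_le_ofReal
      refine (L.le_opNorm₂ _ _).trans ?_
      gcongr
      exact hC t
    · positivity
  refine tendsto_of_tendsto_of_tendsto_of_le_of_le tendsto_const_nhds ?_ (fun _ => zero_le) hb
  simpa using ENNReal.Tendsto.const_mul ht (Or.inr ENNReal.ofReal_ne_top)

lemma conv_deriv {V W : Type*} [NormedAddCommGroup V] [InnerProductSpace ℝ V]
    [FiniteDimensional ℝ V] [MeasurableSpace V] [BorelSpace V]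
    [NormedAddCommGroup W] [NormedSpace ℝ W] [CompleteSpace W]
    (k : V → ℝ) (hk : ContDiff ℝ 1 k) (hkc : HasCompactSupport k)
    (h : ℕ → V → W) (hl : V → W) (hi : ∀ n, Integrable (h n)) (hli : Integrable hl)
    (ht : Tendsto (fun n => ∫⁻ x, ‖h n x - hl x‖ₑ) atTop (𝓝 0)) (z : V) (c : ℝ) :
    Tendsto (fun n => fderiv ℝ
        (fun z => c • (k ⋆[ContinuousLinearMap.lsmul ℝ ℝ, volume] (h n)) z) z) atTop
      (𝓝 (fderiv ℝ (fun z => c • (k ⋆[ContinuousLinearMap.lsmul ℝ ℝ, volume] hl) z) z)) := by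
  have hd : ∀ g : V → W, Integrable g →
      fderiv ℝ (fun z => c • (k ⋆[ContinuousLinearMap.lsmul ℝ ℝ, volume] g) z) z =
      c • ((fderiv ℝ k ⋆[(ContinuousLinearMap.lsmul ℝ ℝ (E := W)).precompL V, volume] g) z) := by
    intro g hg
    exact ((hkc.hasFDerivAt_convolution_left (ContinuousLinearMap.lsmul ℝ ℝ) hk
      hg.locallyIntegrable z).const_smul c).fderiv
  simp only [hd _ hli, fun n => hd _ (hi n)]
  exact (conv_tendsto _ (fderiv ℝ k) (hk.continuous_fderiv one_ne_zero) (hkc.fderiv (𝕜 := ℝ))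
    _ _ hi hli ht z).const_smul c

lemma conv_contDiff {V W : Type*} [NormedAddCommGroup V] [InnerProductSpace ℝ V]
    [FiniteDimensional ℝ V] [MeasurableSpace V] [BorelSpace V]
    [NormedAddCommGroup W] [NormedSpace ℝ W] [CompleteSpace W]
    (k : V → ℝ) (hk : ContDiff ℝ 1 k) (hkc : HasCompactSupport k)
    (g : V → W) (hg : Integrable g) (c : ℝ) :
    ContDiff ℝ 1 (fun z => c • (k ⋆[ContinuousLinearMap.lsmul ℝ ℝ, volume] g) z) := by
  have := hkc.contDiff_convolution_left (n := 1) (ContinuousLinearMap.lsmul ℝ ℝ) hk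
      hg.locallyIntegrable
  exact contDiff_const.smul this

lemma Sy_continuous : Continuous Sy := by
  unfold Sy
  fun_prop

lemma limitA (Ω : Set H4) (hΩo : IsOpen Ω) (G : ℕ → H4 → H4) (Gl : H4 → H4)
    (hG : ∀ n, ContDiffOn ℝ 1 (G n) Ω) (hD : ∀ n, ∀ z ∈ Ω, Sy (fderiv ℝ (G n) z) = 0)
    (hi : ∀ n, IntegrableOn (G n) Ω) (hli : IntegrableOn Gl Ω)
    (ht : Tendsto (fun n => ∫⁻ x in Ω, ‖G n x - Gl x‖ₑ) atTop (𝓝 0)) :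
    ∃ g : H4 → H4, ContDiffOn ℝ 1 g Ω ∧ (∀ z ∈ Ω, Sy (fderiv ℝ g z) = 0) ∧
      ∀ z ∈ Ω, Tendsto (fun n => G n z) atTop (𝓝 (g z)) := by
  have hi' : ∀ n, Integrable (Ω.indicator (G n)) := fun n =>
    (integrable_indicator_iff hΩo.measurableSet).2 (hi n)
  have hli' : Integrable (Ω.indicator Gl) := (integrable_indicator_iff hΩo.measurableSet).2 hli
  have ht' : Tendsto (fun n => ∫⁻ x, ‖Ω.indicator (G n) x - Ω.indicator Gl x‖ₑ) atTop (𝓝 0) := by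
    convert ht using 2 with n
    rw [← lintegral_indicator hΩo.measurableSet]
    congr 1
    funext x
    by_cases hx : x ∈ Ω <;> simp [hx]
  -- local description of the limit
  have hloc : ∀ r, 0 < r → ∀ z, Metric.closedBall z (2 * r) ⊆ Ω →
      Tendsto (fun n => G n z) atTop
        (𝓝 ((∫ y, bmp r y)⁻¹ • ((bmp r) ⋆[ContinuousLinearMap.lsmul ℝ ℝ, volume] (Ω.indicator Gl)) z)) := by
    intro r hr z hz
    have h1 := conv_tendsto (ContinuousLinearMap.lsmul ℝ ℝ) (bmp r) (bmp_contDiff r (n := 0)).continuous (bmp_cs r hr) _ _ hi'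
      hli' ht' z
    have h2 := h1.const_smul (∫ y, bmp r y)⁻¹
    refine h2.congr fun n => ?_
    rw [local_conv Ω hΩo (G n) (hG n) (hD n) z r hr hz, smul_smul,
      inv_mul_cancel₀ (bmp_int_pos r hr).ne', one_smul]
  have hrad : ∀ z ∈ Ω, ∃ r, 0 < r ∧ ∀ x ∈ Metric.ball z r, Metric.closedBall x (2 * r) ⊆ Ω := by
    intro z hz
    obtain ⟨ε, hε, h⟩ := Metric.isOpen_iff.1 hΩo z hz
    refine ⟨ε / 4, by linarith, fun x hx y hy => h ?_⟩
    rw [Metric.mem_ball] at hx ⊢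
    rw [Metric.mem_closedBall] at hy
    linarith [dist_triangle y x z]
  let g : H4 → H4 := fun z => limUnder atTop (fun n => G n z)
  have hgt : ∀ z ∈ Ω, Tendsto (fun n => G n z) atTop (𝓝 (g z)) := by
    intro z hz
    obtain ⟨r, hr, h⟩ := hrad z hz
    exact tendsto_nhds_limUnder ⟨_, hloc r hr z (h z (Metric.mem_ball_self hr))⟩
  have hgeq : ∀ z, ∀ r, 0 < r → (∀ x ∈ Metric.ball z r, Metric.closedBall x (2 * r) ⊆ Ω) →
      g =ᶠ[𝓝 z] fun z => (∫ y, bmp r y)⁻¹ • ((bmp r) ⋆[ContinuousLinearMap.lsmul ℝ ℝ, volume] (Ω.indicator Gl)) z := by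
    intro z r hr h
    filter_upwards [Metric.ball_mem_nhds z hr] with x hx
    exact (hloc r hr x (h x hx)).limUnder_eq
  have hGeq : ∀ n, ∀ z, ∀ r, 0 < r → (∀ x ∈ Metric.ball z r, Metric.closedBall x (2 * r) ⊆ Ω) →
      G n =ᶠ[𝓝 z] fun z => (∫ y, bmp r y)⁻¹ • ((bmp r) ⋆[ContinuousLinearMap.lsmul ℝ ℝ, volume] (Ω.indicator (G n))) z := by
    intro n z r hr h
    filter_upwards [Metric.ball_mem_nhds z hr] with x hx
    rw [local_conv Ω hΩo (G n) (hG n) (hD n) x r hr (h x hx), smul_smul,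
      inv_mul_cancel₀ (bmp_int_pos r hr).ne', one_smul]
  refine ⟨g, ?_, ?_, hgt⟩
  · intro z hz
    obtain ⟨r, hr, h⟩ := hrad z hz
    refine ContDiffAt.contDiffWithinAt (ContDiffAt.congr_of_eventuallyEq ?_ (hgeq z r hr h))
    exact (conv_contDiff (bmp r) (bmp_contDiff r (n := 1)) (bmp_cs r hr) _ hli' _).contDiffAt
  · intro z hz
    obtain ⟨r, hr, h⟩ := hrad z hz
    have h1 : Tendsto (fun n => fderiv ℝ (G n) z) atTop (𝓝 (fderiv ℝ g z)) := by
      rw [(hgeq z r hr h).fderiv_eq]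
      refine (conv_deriv (bmp r) (bmp_contDiff r (n := 1)) (bmp_cs r hr) _ _ hi' hli' ht' z
        (∫ y, bmp r y)⁻¹).congr fun n => ?_
      rw [(hGeq n z r hr h).fderiv_eq]
    have h3 := (Sy_continuous.tendsto _).comp h1
    refine tendsto_nhds_unique h3 ?_
    refine tendsto_const_nhds.congr fun n => ?_
    exact (hD n z hz).symm

lemma Sy_exp (w : H4) (f : H4 → H4) (z : H4) (hf : DifferentiableAt ℝ f z) :
    Sy (fderiv ℝ (fun x => Real.exp (inner ℝ x w) • f x) z) =
      Real.exp (inner ℝ z w) • (w * f z + Sy (fderiv ℝ f z)) := by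
  have h1 : HasFDerivAt (fun x : H4 => inner ℝ x w) ((innerSL ℝ).flip w) z :=
    ((innerSL ℝ).flip w).hasFDerivAt
  have h2 := (h1.exp.smul hf.hasFDerivAt).fderiv
  have h3 : fderiv ℝ (fun x => Real.exp (inner ℝ x w) • f x) z = _ := h2
  have hv : ∀ v, fderiv ℝ (fun x => Real.exp (inner ℝ x w) • f x) z v =
      Real.exp (inner ℝ z w) • (fderiv ℝ f z v + (inner ℝ w v) • f z) := by
    intro v
    rw [h3]
    simp [smul_smul, real_inner_comm w v]
    rfl
  unfold Sy
  simp only [hv, inner_one', inner_qI, inner_qJ, inner_qK]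
  simp only [mul_smul_comm, ← smul_add]
  congr 1
  have hw : w * f z = w.re • f z + w.imI • (qI * f z) + w.imJ • (qJ * f z)
      + w.imK • (qK * f z) := by
    conv_lhs => rw [quat_decomp w]
    simp only [add_mul, smul_mul_assoc, one_mul]
  rw [hw]
  simp only [mul_add, mul_smul_comm]
  abel

lemma exp_contDiff (w : H4) : ContDiff ℝ 1 (fun x : H4 => Real.exp (inner ℝ x w)) := by
  have : ContDiff ℝ 1 (fun x : H4 => inner ℝ x w) := ((innerSL ℝ).flip w).contDiff
  exact this.exp

lemma l2_eq {α : Type*} [MeasurableSpace α] (μ : Measure α) (f : α → H4) (hf : MemLp f 2 μ) :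
    eLpNorm f 2 μ = ENNReal.ofReal (Real.sqrt (∫ x, ‖f x‖ ^ 2 ∂μ)) := by
  rw [hf.eLpNorm_eq_integral_rpow_norm (by norm_num) (by norm_num), Real.sqrt_eq_rpow]
  norm_num

lemma eLpNorm_iff {α : Type*} [MeasurableSpace α] {μ : Measure α} (f : α → H4)
    (hf : MemLp f 2 μ) : ∫ x, ‖f x‖ ^ 2 ∂μ = (eLpNorm f 2 μ).toReal ^ 2 := by
  rw [l2_eq μ f hf, ENNReal.toReal_ofReal (Real.sqrt_nonneg _), Real.sq_sqrt]
  exact integral_nonneg fun x => by positivity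

lemma complete_l2 {α W : Type*} [MeasurableSpace α] {μ : Measure α} [NormedAddCommGroup W]
    [CompleteSpace W] (F : ℕ → α → W) (hF : ∀ n, MemLp (F n) 2 μ)
    (hc : ∀ ε > (0 : ℝ), ∃ N : ℕ, ∀ m ≥ N, ∀ n ≥ N,
      eLpNorm (F m - F n) 2 μ < ENNReal.ofReal ε) :
    ∃ f, MemLp f 2 μ ∧ Tendsto (fun n => eLpNorm (F n - f) 2 μ) atTop (𝓝 0) := by
  haveI : Fact ((1 : ENNReal) ≤ 2) := ⟨by norm_num⟩
  have hcs : CauchySeq (fun n => (hF n).toLp (F n)) := by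
    rw [Metric.cauchySeq_iff]
    intro ε hε
    obtain ⟨N, hN⟩ := hc ε hε
    refine ⟨N, fun m hm n hn => ?_⟩
    rw [dist_edist, Lp.edist_toLp_toLp]
    exact (ENNReal.lt_ofReal_iff_toReal_lt ((hN m hm n hn).ne_top)).1 (hN m hm n hn)
  obtain ⟨g, hg⟩ := cauchySeq_tendsto_of_complete hcs
  refine ⟨g, Lp.memLp g, ?_⟩
  have := (Lp.tendsto_Lp_iff_tendsto_eLpNorm'' (fun n => F n) hF g (Lp.memLp g)).1
    (by simpa using hg)
  exact this

/-- the Bergman space `{}^θ_u𝒜(Ω)` is complete in the L² norm. -/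
theorem statement7 (Ω : Set H4) (hΩo : IsOpen Ω) (hΩc : IsConnected Ω)
    (hΩb : Bornology.IsBounded Ω) (θ : ℝ) (hθ : θ ∈ Set.Ico 0 (2 * Real.pi)) (u : H4)
    (F : ℕ → H4 → H4) (hF : ∀ n, memA θ u Ω (F n))
    (hcauchy : ∀ ε > (0 : ℝ), ∃ N : ℕ, ∀ m ≥ N, ∀ n ≥ N,
        Real.sqrt (∫ ζ in Ω, ‖F m ζ - F n ζ‖ ^ 2) < ε) :
    ∃ f : H4 → H4, memA θ u Ω f ∧
      Filter.Tendsto (fun n => ∫ ζ in Ω, ‖F n ζ - f ζ‖ ^ 2) Filter.atTop (nhds 0) := by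
  have hfin : IsFiniteMeasure (volume.restrict Ω) :=
    ⟨by rw [Measure.restrict_apply_univ]; exact hΩb.measure_lt_top⟩
  have hm : ∀ f, memA θ u Ω f → MemLp f 2 (volume.restrict Ω) := fun f hf =>
    (memLp_two_iff_integrable_sq_norm
      (hf.1.continuousOn.aestronglyMeasurable hΩo.measurableSet)).2 hf.2.2
  have hFm := fun n => hm _ (hF n)
  obtain ⟨Fl, hFl, hlim⟩ := complete_l2 F hFm (by
    intro ε hε
    obtain ⟨N, hN⟩ := hcauchy ε hε
    refine ⟨N, fun m hm n hn => ?_⟩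
    rw [l2_eq _ _ ((hFm m).sub (hFm n))]
    exact (ENNReal.ofReal_lt_ofReal_iff hε).2 (hN m hm n hn))
  have hdiff : ∀ n, ∀ z ∈ Ω, DifferentiableAt ℝ (F n) z := fun n z hz =>
    ((hF n).1.differentiableOn one_ne_zero).differentiableAt (hΩo.mem_nhds hz)
  obtain ⟨R, hR⟩ := hΩb.exists_norm_le
  have hexpb : ∀ z ∈ Ω, ‖Real.exp (inner ℝ z u)‖ ≤ Real.exp (R * ‖u‖) := by
    intro z hz
    rw [Real.norm_eq_abs, Real.abs_exp]
    apply Real.exp_le_exp.2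
    refine (real_inner_le_norm _ _).trans ?_
    gcongr
    exact hR z hz
  have hexpm : AEStronglyMeasurable (fun x : H4 => Real.exp (inner ℝ x u))
      (volume.restrict Ω) := (exp_contDiff u).continuous.aestronglyMeasurable
  have hexpae : ∀ᵐ z ∂(volume.restrict Ω), ‖Real.exp (inner ℝ z u)‖ ≤ Real.exp (R * ‖u‖) :=
    (ae_restrict_iff' hΩo.measurableSet).2 (Eventually.of_forall hexpb)
  have hintg : ∀ f : H4 → H4, MemLp f 2 (volume.restrict Ω) →
      IntegrableOn (fun x => Real.exp (inner ℝ x u) • f x) Ω := fun f hf =>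
    (hf.integrable (by norm_num)).bdd_smul _ hexpm hexpae
  have hL1 : Tendsto (fun n => ∫⁻ x in Ω, ‖Real.exp (inner ℝ x u) • F n x
      - Real.exp (inner ℝ x u) • Fl x‖ₑ) atTop (𝓝 0) := by
    have hb : ∀ n, ∫⁻ x in Ω, ‖Real.exp (inner ℝ x u) • F n x
        - Real.exp (inner ℝ x u) • Fl x‖ₑ ≤ ENNReal.ofReal (Real.exp (R * ‖u‖)) *
          (eLpNorm (F n - Fl) 2 (volume.restrict Ω) *
            (volume.restrict Ω) univ ^ (1 / (1 : ENNReal).toReal - 1 / (2 : ENNReal).toReal)) := by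
      intro n
      have h1 := eLpNorm_le_eLpNorm_mul_rpow_measure_univ (p := 1) (q := 2)
        (μ := volume.restrict Ω) (by norm_num) ((hFm n).sub hFl).1
      rw [eLpNorm_one_eq_lintegral_enorm] at h1
      refine le_trans ?_ (mul_le_mul_right h1 _)
      rw [← lintegral_const_mul' _ _ ENNReal.ofReal_ne_top]
      apply lintegral_mono_ae
      filter_upwards [hexpae] with x hx
      rw [← smul_sub, enorm_smul, ← ofReal_norm]
      gcongr
      rfl
    refine tendsto_of_tendsto_of_tendsto_of_le_of_le tendsto_const_nhds ?_ (fun _ => zero_le) hb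
    have h2 : (volume.restrict Ω) univ ^ (1 / (1 : ENNReal).toReal - 1 / (2 : ENNReal).toReal)
        ≠ ⊤ := ENNReal.rpow_ne_top_of_nonneg (by norm_num) (measure_ne_top _ _)
    have h3 := ENNReal.Tendsto.mul_const hlim (Or.inr h2)
    simpa using ENNReal.Tendsto.const_mul h3 (Or.inr ENNReal.ofReal_ne_top)
  obtain ⟨g, hg1, hg2, hg3⟩ := limitA Ω hΩo (fun n x => Real.exp (inner ℝ x u) • F n x)
    (fun x => Real.exp (inner ℝ x u) • Fl x)
    (fun n => (exp_contDiff u).contDiffOn.smul (hF n).1)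
    (fun n z hz => by
      have h := (hF n).2.1 z hz
      rw [Dlu, Dl_eq, add_comm] at h
      rw [Sy_exp u (F n) z (hdiff n z hz), h, smul_zero])
    (fun n => hintg _ (hFm n)) (hintg _ hFl) hL1
  let f : H4 → H4 := fun x => Real.exp (inner ℝ x (-u)) • g x
  have hpt : ∀ z ∈ Ω, Tendsto (fun n => F n z) atTop (𝓝 (f z)) := by
    intro z hz
    refine ((hg3 z hz).const_smul (Real.exp (inner ℝ z (-u)))).congr fun n => ?_
    rw [smul_smul, ← Real.exp_add, inner_neg_right, neg_add_cancel, Real.exp_zero, one_smul]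
  have hae : Fl =ᵐ[volume.restrict Ω] f := by
    have h1 := tendstoInMeasure_of_tendsto_eLpNorm (p := 2) (by norm_num)
      (fun n => (hFm n).1) hFl.1 hlim
    obtain ⟨ns, hns, h2⟩ := h1.exists_seq_tendsto_ae
    filter_upwards [h2, ae_restrict_mem hΩo.measurableSet] with x hx hxΩ
    exact tendsto_nhds_unique hx ((hpt x hxΩ).comp hns.tendsto_atTop)
  have hfm : MemLp f 2 (volume.restrict Ω) := (memLp_congr_ae hae).1 hFl
  refine ⟨f, ⟨(exp_contDiff (-u)).contDiffOn.smul hg1, ?_, ?_⟩, ?_⟩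
  · intro z hz
    rw [Dlu, Dl_eq]
    have hgd : DifferentiableAt ℝ g z :=
      (hg1.differentiableOn one_ne_zero).differentiableAt (hΩo.mem_nhds hz)
    have := Sy_exp (-u) g z hgd
    rw [hg2 z hz, add_zero] at this
    change Sy (fderiv ℝ (fun x => Real.exp (inner ℝ x (-u)) • g x) z) + _ = 0
    rw [this]
    simp only [f, neg_mul, smul_neg, mul_smul_comm]
    exact neg_add_cancel _
  · exact (memLp_two_iff_integrable_sq_norm hfm.1).1 hfm
  · have h1 : ∀ n, ∫ ζ in Ω, ‖F n ζ - f ζ‖ ^ 2 =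
        (eLpNorm (F n - Fl) 2 (volume.restrict Ω)).toReal ^ 2 := by
      intro n
      have h2 := eLpNorm_iff (F n - f) ((hFm n).sub hfm)
      rw [eLpNorm_congr_ae (Filter.EventuallyEq.rfl.sub hae)]
      exact h2
    simp only [h1]
    have h3 := ((ENNReal.tendsto_toReal ENNReal.zero_ne_top).comp hlim).pow 2
    simpa using h3

end
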